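/- In the MM-SPIR model (with all constraints), conditioning on an undesired message set does not decrease the conditional entropy of any individual answer: for every database index n ∈ {1,…,N} and any two size-P subsets 𝒫1 ≠ 𝒫2 of {1,…,K}, H(A_n^{[𝒫2]} | W_{𝒫1}, Q_n^{[𝒫2]}) = H(A_n^{[𝒫2]} | Q_n^{[𝒫2]}); equivalently, I(W_{𝒫1}; A_n^{[𝒫2]} | Q_n^{[𝒫2]}) = 0. -/

import Mathlib

open Finset

namespace MMSPIR

variable {Ω : Type} [Fintype Ω]

/-- Probability that the random variable `X` takes the value `v`,
under the weight function `p` on the finite sample space `Ω`. -/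
noncomputable def prob (p : Ω → ℝ) {V : Type} [DecidableEq V] (X : Ω → V) (v : V) : ℝ :=
  ∑ ω ∈ Finset.univ.filter (fun ω => X ω = v), p ω

/-- Shannon entropy of `X`, with logarithm taken to base `q`. -/
noncomputable def ent (q : ℕ) (p : Ω → ℝ) {V : Type} [Fintype V] [DecidableEq V]
    (X : Ω → V) : ℝ :=
  -∑ v : V, prob p X v * Real.logb q (prob p X v)

/-- Conditional entropy `H(X | Y)`, base `q`. -/
noncomputable def cent (q : ℕ) (p : Ω → ℝ) {V W : Type} [Fintype V] [DecidableEq V]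
    [Fintype W] [DecidableEq W] (X : Ω → V) (Y : Ω → W) : ℝ :=
  ent q p (fun ω => (X ω, Y ω)) - ent q p Y

/-- Mutual information `I(X ; Y)`, base `q`. -/
noncomputable def mi (q : ℕ) (p : Ω → ℝ) {V W : Type} [Fintype V] [DecidableEq V]
    [Fintype W] [DecidableEq W] (X : Ω → V) (Y : Ω → W) : ℝ :=
  ent q p X + ent q p Y - ent q p (fun ω => (X ω, Y ω))

/-- Conditional mutual information `I(X ; Y | Z)`, base `q`. -/
noncomputable def cmi (q : ℕ) (p : Ω → ℝ) {U V W : Type} [Fintype U] [DecidableEq U]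
    [Fintype V] [DecidableEq V] [Fintype W] [DecidableEq W]
    (X : Ω → U) (Y : Ω → V) (Z : Ω → W) : ℝ :=
  cent q p X Z + cent q p Y Z - cent q p (fun ω => (X ω, Y ω)) Z

/-- `X` and `Y` have the same distribution. -/
def IdentDist (p : Ω → ℝ) {V : Type} [DecidableEq V] (X Y : Ω → V) : Prop :=
  ∀ v, prob p X v = prob p Y v

/-- Probability of the fibre of `X` through `ω`. -/
noncomputable def cl (p : Ω → ℝ) {V : Type} [DecidableEq V] (X : Ω → V) (ω : Ω) : ℝ :=
  prob p X (X ω)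

theorem cl_eq (p : Ω → ℝ) {V : Type} [DecidableEq V] (X : Ω → V) (ω : Ω) :
    cl p X ω = ∑ ω', if X ω' = X ω then p ω' else 0 := by
  simp [cl, prob, Finset.sum_filter]

theorem ent_eq (q : ℕ) (p : Ω → ℝ) {V : Type} [Fintype V] [DecidableEq V] (X : Ω → V) :
    ent q p X = -∑ ω, p ω * Real.logb q (cl p X ω) := by
  unfold ent
  congr 1
  rw [← Finset.sum_fiberwise Finset.univ X]
  refine Finset.sum_congr rfl fun v _ => ?_
  conv_lhs => rw [prob, Finset.sum_mul]
  refine Finset.sum_congr rfl fun ω hω => ?_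
  simp only [Finset.mem_filter, Finset.mem_univ, true_and] at hω
  rw [cl, hω]
  rfl

theorem cl_nonneg {p : Ω → ℝ} (hp : ∀ ω, 0 ≤ p ω) {V : Type} [DecidableEq V] (X : Ω → V)
    (ω : Ω) : 0 ≤ cl p X ω :=
  Finset.sum_nonneg fun _ _ => hp _

theorem le_cl {p : Ω → ℝ} (hp : ∀ ω, 0 ≤ p ω) {V : Type} [DecidableEq V] (X : Ω → V)
    (ω : Ω) : p ω ≤ cl p X ω :=
  Finset.single_le_sum (f := p) (fun _ _ => hp _) (by simp)

theorem cl_mono {p : Ω → ℝ} (hp : ∀ ω, 0 ≤ p ω) {V V' : Type} [DecidableEq V] [DecidableEq V']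
    (X : Ω → V) (Y : Ω → V') (h : ∀ ω ω', X ω = X ω' → Y ω = Y ω') (ω : Ω) :
    cl p X ω ≤ cl p Y ω := by
  refine Finset.sum_le_sum_of_subset_of_nonneg ?_ fun _ _ _ => hp _
  intro ω' h'
  simp only [Finset.mem_filter, Finset.mem_univ, true_and] at h' ⊢
  exact h _ _ h'

theorem cl_congr (p : Ω → ℝ) {V : Type} [DecidableEq V] (X : Ω → V) {ω ω' : Ω}
    (h : X ω = X ω') : cl p X ω = cl p X ω' := by
  rw [cl, cl, h]

theorem sum_div_cl_le {p : Ω → ℝ} (hp : ∀ ω, 0 ≤ p ω) {V : Type} [DecidableEq V]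
    (X : Ω → V) (ω₀ : Ω) :
    (∑ ω, if X ω = X ω₀ then p ω / cl p X ω else 0) ≤ 1 := by
  have : (∑ ω, if X ω = X ω₀ then p ω / cl p X ω else 0) = cl p X ω₀ / cl p X ω₀ := by
    conv_rhs => rw [cl_eq, Finset.sum_div]
    refine Finset.sum_congr rfl fun ω _ => ?_
    split_ifs with h
    · rw [cl_congr p X h, cl_eq]
    · simp
  rw [this]
  exact div_self_le_one _

theorem key_sum {p : Ω → ℝ} (hp : ∀ ω, 0 ≤ p ω) (hp1 : ∑ ω, p ω = 1)
    {V1 V2 V3 : Type} [DecidableEq V1] [DecidableEq V2] [DecidableEq V3]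
    (X : Ω → V1) (Y : Ω → V2) (Z : Ω → V3)
    (hX : ∀ ω ω', X ω = X ω' → Z ω = Z ω') (hY : ∀ ω ω', Y ω = Y ω' → Z ω = Z ω') :
    ∑ ω, p ω / cl p (fun ω => (X ω, Y ω)) ω * (cl p X ω * cl p Y ω / cl p Z ω) ≤ 1 := by
  set D : Ω → V1 × V2 := fun ω => (X ω, Y ω) with hD
  have e1 : ∑ ω, p ω / cl p D ω * (cl p X ω * cl p Y ω / cl p Z ω)
      = ∑ a, ∑ b, ∑ ω, (if X a = X ω then p a else 0) * (if Y b = Y ω then p b else 0) *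
        (p ω / cl p D ω / cl p Z ω) := by
    have : ∀ ω, p ω / cl p D ω * (cl p X ω * cl p Y ω / cl p Z ω) =
        ∑ a, ∑ b, (if X a = X ω then p a else 0) * (if Y b = Y ω then p b else 0) *
        (p ω / cl p D ω / cl p Z ω) := by
      intro ω
      rw [cl_eq p X, cl_eq p Y]
      simp_rw [← Finset.sum_mul, ← Finset.mul_sum, ← Finset.sum_mul]
      ring
    simp_rw [this]
    rw [Finset.sum_comm]
    refine Finset.sum_congr rfl fun a _ => ?_
    rw [Finset.sum_comm]
  rw [e1]
  have e2 : ∀ a b, ∑ ω, (if X a = X ω then p a else 0) * (if Y b = Y ω then p b else 0) *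
        (p ω / cl p D ω / cl p Z ω) ≤ p a * ((if Z b = Z a then p b else 0) / cl p Z a) := by
    intro a b
    by_cases hne : ∃ ω₀, X a = X ω₀ ∧ Y b = Y ω₀
    · obtain ⟨ω₀, h1, h2⟩ := hne
      have hz : Z b = Z a := (hY _ _ h2).trans (hX _ _ h1).symm
      rw [if_pos hz]
      have : ∑ ω, (if X a = X ω then p a else 0) * (if Y b = Y ω then p b else 0) *
        (p ω / cl p D ω / cl p Z ω) =
          (p a * (p b / cl p Z a)) * ∑ ω, if D ω = D ω₀ then p ω / cl p D ω else 0 := by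
        rw [Finset.mul_sum]
        refine Finset.sum_congr rfl fun ω _ => ?_
        by_cases h : D ω = D ω₀
        · have h' := h
          simp only [hD, Prod.mk.injEq] at h'
          rw [if_pos (h1.trans h'.1.symm), if_pos (h2.trans h'.2.symm), if_pos h,
            cl_congr p Z (hX _ _ (h1.trans h'.1.symm))]
          ring
        · rw [if_neg h, mul_zero]
          by_cases h3 : X a = X ω
          · by_cases h4 : Y b = Y ω
            · exact absurd (by simp [hD, ← h1, ← h2, h3, h4]) h
            · simp [h4]
          · simp [h3]
      rw [this]
      exact mul_le_of_le_one_right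
        (mul_nonneg (hp _) (div_nonneg (hp _) (cl_nonneg hp _ _))) (sum_div_cl_le hp D ω₀)
    · rw [Finset.sum_eq_zero]
      · refine mul_nonneg (hp _) (div_nonneg ?_ (cl_nonneg hp _ _))
        split_ifs
        exacts [hp _, le_rfl]
      · intro ω _
        by_cases h3 : X a = X ω
        · by_cases h4 : Y b = Y ω
          · exact absurd ⟨ω, h3, h4⟩ hne
          · simp [h4]
        · simp [h3]
  calc _ ≤ ∑ a, ∑ b, p a * ((if Z b = Z a then p b else 0) / cl p Z a) :=
        Finset.sum_le_sum fun a _ => Finset.sum_le_sum fun b _ => e2 a b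
    _ ≤ ∑ a, p a := by
        refine Finset.sum_le_sum fun a _ => ?_
        rw [← Finset.mul_sum, ← Finset.sum_div, ← cl_eq]
        exact mul_le_of_le_one_right (hp _) (div_self_le_one _)
    _ = 1 := hp1

/-- Submodularity of entropy, stated through fibres. -/
theorem submod {q : ℕ} (hq : 1 < q) {p : Ω → ℝ} (hp : ∀ ω, 0 ≤ p ω) (hp1 : ∑ ω, p ω = 1)
    {V1 V2 V3 V4 : Type} [Fintype V1] [DecidableEq V1] [Fintype V2] [DecidableEq V2]
    [Fintype V3] [DecidableEq V3] [Fintype V4] [DecidableEq V4]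
    (X : Ω → V1) (Y : Ω → V2) (Z : Ω → V3) (D : Ω → V4)
    (hX : ∀ ω ω', X ω = X ω' → Z ω = Z ω') (hY : ∀ ω ω', Y ω = Y ω' → Z ω = Z ω')
    (hD : ∀ ω ω', X ω = X ω' → Y ω = Y ω' → D ω = D ω') :
    ent q p D + ent q p Z ≤ ent q p X + ent q p Y := by
  have hlq : 0 < Real.log q := Real.log_pos (by exact_mod_cast hq)
  have hk := key_sum hp hp1 X Y Z hX hY
  have pt : ∀ ω, p ω - p ω / cl p (fun ω => (X ω, Y ω)) ω * (cl p X ω * cl p Y ω / cl p Z ω) ≤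
      p ω * (Real.log (cl p D ω) + Real.log (cl p Z ω) - Real.log (cl p X ω)
        - Real.log (cl p Y ω)) := by
    intro ω
    rcases (hp ω).eq_or_lt with h0 | h0
    · simp [← h0]
    · have gX := h0.trans_le (le_cl hp X ω)
      have gY := h0.trans_le (le_cl hp Y ω)
      have gZ := h0.trans_le (le_cl hp Z ω)
      have gE := h0.trans_le (le_cl hp (fun ω => (X ω, Y ω)) ω)
      have hDE : cl p (fun ω => (X ω, Y ω)) ω ≤ cl p D ω :=
        cl_mono hp _ _ (fun a b h => by
          simp only [Prod.mk.injEq] at h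
          exact hD _ _ h.1 h.2) ω
      set x := cl p X ω
      set y := cl p Y ω
      set z := cl p Z ω
      set e := cl p (fun ω => (X ω, Y ω)) ω
      have l1 : Real.log e ≤ Real.log (cl p D ω) := Real.log_le_log gE hDE
      have l2 : Real.log (x * y / (e * z)) ≤ x * y / (e * z) - 1 :=
        Real.log_le_sub_one_of_pos (by positivity)
      rw [Real.log_div (by positivity) (by positivity), Real.log_mul (by positivity) (by positivity),
        Real.log_mul (by positivity) (by positivity)] at l2
      have : p ω - p ω / e * (x * y / z) = p ω * (1 - x * y / (e * z)) := by
        field_simp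
      rw [this]
      exact mul_le_mul_of_nonneg_left (by linarith) h0.le
  have hs := Finset.sum_le_sum fun ω (_ : ω ∈ Finset.univ) => pt ω
  rw [Finset.sum_sub_distrib, hp1] at hs
  have h0 : 0 ≤ ∑ ω, p ω * (Real.log (cl p D ω) + Real.log (cl p Z ω) - Real.log (cl p X ω)
        - Real.log (cl p Y ω)) := by linarith
  simp only [mul_sub, mul_add, Finset.sum_sub_distrib, Finset.sum_add_distrib] at h0
  simp only [ent_eq, Real.logb, ← mul_div_assoc, ← Finset.sum_div]
  rw [← sub_nonneg]
  have := div_nonneg h0 hlq.le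
  simp only [sub_div, add_div] at this
  linarith

theorem ent_const {q : ℕ} {p : Ω → ℝ} (hp1 : ∑ ω, p ω = 1) :
    ent q p (fun _ => ()) = 0 := by
  simp [ent_eq, cl_eq, hp1]

theorem ent_mono {q : ℕ} (hq : 1 < q) {p : Ω → ℝ} (hp : ∀ ω, 0 ≤ p ω) (hp1 : ∑ ω, p ω = 1)
    {V1 V2 : Type} [Fintype V1] [DecidableEq V1] [Fintype V2] [DecidableEq V2]
    (X : Ω → V1) (Y : Ω → V2) (h : ∀ ω ω', X ω = X ω' → Y ω = Y ω') :
    ent q p Y ≤ ent q p X := by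
  have := submod hq hp hp1 X Y Y X h (fun _ _ h => h) (fun _ _ h _ => h)
  have h2 := submod hq hp hp1 X X Y X h h (fun _ _ h _ => h)
  linarith

theorem ent_subadd {q : ℕ} (hq : 1 < q) {p : Ω → ℝ} (hp : ∀ ω, 0 ≤ p ω) (hp1 : ∑ ω, p ω = 1)
    {V1 V2 V4 : Type} [Fintype V1] [DecidableEq V1] [Fintype V2] [DecidableEq V2]
    [Fintype V4] [DecidableEq V4]
    (X : Ω → V1) (Y : Ω → V2) (D : Ω → V4)
    (hD : ∀ ω ω', X ω = X ω' → Y ω = Y ω' → D ω = D ω') :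
    ent q p D ≤ ent q p X + ent q p Y := by
  have := submod hq hp hp1 X Y (fun _ => ()) D (fun _ _ _ => rfl) (fun _ _ _ => rfl) hD
  rw [ent_const hp1] at this
  linarith

theorem ent_comp (q : ℕ) (p : Ω → ℝ) {V V' : Type} [Fintype V] [DecidableEq V]
    [Fintype V'] [DecidableEq V'] (X Y : Ω → V) (h : IdentDist p X Y) (g : V → V') :
    ent q p (fun ω => g (X ω)) = ent q p (fun ω => g (Y ω)) := by
  have aux : ∀ (X : Ω → V) v, prob p (fun ω => g (X ω)) v = ∑ u, if g u = v then prob p X u else 0 := by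
    intro X v
    simp only [prob, Finset.sum_filter]
    rw [← Finset.sum_fiberwise Finset.univ X]
    refine Finset.sum_congr rfl fun u _ => ?_
    rw [Finset.sum_filter]
    split_ifs with hu
    · refine Finset.sum_congr rfl fun ω _ => ?_
      split_ifs with h1 h2 h2
      · rfl
      · exact absurd (h1 ▸ hu) h2
      · rfl
    · refine Finset.sum_eq_zero fun ω _ => ?_
      split_ifs with h1 h2
      · exact absurd (h1 ▸ h2) hu
      · rfl
      · rfl
  unfold ent
  simp only [aux, h _]

/-- The tuple of messages indexed by `T`. -/
def WT {MT : Type} {K : ℕ} (W : Fin K → Ω → MT) (T : Finset (Fin K)) (ω : Ω)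
    (k : {x : Fin K // x ∈ T}) : MT := W k.1 ω

theorem WT_iff {MT : Type} {K : ℕ} (W : Fin K → Ω → MT) (T : Finset (Fin K)) (ω ω' : Ω) :
    WT W T ω = WT W T ω' ↔ ∀ k ∈ T, W k ω = W k ω' := by
  simp [WT, funext_iff]

theorem WT_sub {q : ℕ} (hq : 1 < q) {p : Ω → ℝ} (hp : ∀ ω, 0 ≤ p ω) (hp1 : ∑ ω, p ω = 1)
    {MT V : Type} [Fintype MT] [DecidableEq MT] [Fintype V] [DecidableEq V] {K : ℕ} {L : ℝ}
    (W : Fin K → Ω → MT) (hW : ∀ k, ent q p (W k) = L) (T T' : Finset (Fin K)) (Y : Ω → V) :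
    ent q p (fun ω => (WT W (T ∪ T') ω, Y ω)) ≤
      T.card * L + ent q p (fun ω => (WT W T' ω, Y ω)) := by
  induction T using Finset.induction_on with
  | empty => rw [Finset.empty_union]; simp
  | insert k T hk ih =>
    have := ent_subadd hq hp hp1 (W k) (fun ω => (WT W (T ∪ T') ω, Y ω))
      (fun ω => (WT W (insert k T ∪ T') ω, Y ω)) (by
        intro a b h1 h2
        simp only [Prod.mk.injEq, WT_iff] at h2 ⊢
        refine ⟨fun j hj => ?_, h2.2⟩
        rw [Finset.insert_union, Finset.mem_insert] at hj
        rcases hj with rfl | hj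
        · exact h1
        · exact h2.1 j hj)
    rw [hW] at this
    rw [Finset.card_insert_of_notMem hk]
    push_cast
    linarith

theorem conditioning_on_undesired_message_set
    {Ω MT QT AT FT ST : Type}
    [Fintype Ω] [Fintype MT] [DecidableEq MT] [Fintype QT] [DecidableEq QT]
    [Fintype AT] [DecidableEq AT] [Fintype FT] [DecidableEq FT]
    [Fintype ST] [DecidableEq ST]
    (N K P L q : ℕ) (hN : 2 ≤ N) (hK : 2 ≤ K) (hP1 : 1 ≤ P) (hP2 : P ≤ K - 1)
    (hL : 1 ≤ L) (hq : IsPrimePow q)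
    (p : Ω → ℝ) (hp0 : ∀ ω, 0 ≤ p ω) (hp1 : (∑ ω, p ω) = 1)
    (W : Fin K → Ω → MT) (F : Ω → FT) (S : Ω → ST)
    (Q : Finset (Fin K) → Fin N → Ω → QT)
    (A : Finset (Fin K) → Fin N → Ω → AT)
    (hWk : ∀ k, ent q p (W k) = (L : ℝ))
    (hWall : ent q p (fun ω (k : Fin K) => W k ω) = (K : ℝ) * L)
    (hind : ent q p (fun ω => (F ω, S ω, fun k : Fin K => W k ω)) =
      ent q p F + ent q p S + ent q p (fun ω (k : Fin K) => W k ω))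
    (hQdet : ∀ 𝒫₀ : Finset (Fin K), 𝒫₀.card = P →
      cent q p (fun ω (n : Fin N) => Q 𝒫₀ n ω) F = 0)
    (hAdet : ∀ 𝒫₀ : Finset (Fin K), 𝒫₀.card = P → ∀ n : Fin N,
      cent q p (A 𝒫₀ n) (fun ω => (Q 𝒫₀ n ω, (fun k : Fin K => W k ω), S ω)) = 0)
    (hrel : ∀ 𝒫₀ : Finset (Fin K), 𝒫₀.card = P →
      cent q p (fun ω (k : {x : Fin K // x ∈ 𝒫₀}) => W k.1 ω)
        (fun ω => ((fun n : Fin N => A 𝒫₀ n ω), F ω)) = 0)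
    (hupriv : ∀ (n : Fin N) (𝒫₁ 𝒫₂ : Finset (Fin K)), 𝒫₁.card = P → 𝒫₂.card = P →
      IdentDist p
        (fun ω => (Q 𝒫₁ n ω, A 𝒫₁ n ω, (fun k : Fin K => W k ω), S ω))
        (fun ω => (Q 𝒫₂ n ω, A 𝒫₂ n ω, (fun k : Fin K => W k ω), S ω)))
    (hdpriv : ∀ 𝒫₀ : Finset (Fin K), 𝒫₀.card = P →
      mi q p (fun ω (k : {x : Fin K // x ∈ 𝒫₀ᶜ}) => W k.1 ω)
        (fun ω => ((fun n : Fin N => Q 𝒫₀ n ω), (fun n : Fin N => A 𝒫₀ n ω), F ω)) = 0)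
    : ∀ (n : Fin N) (𝒫₁ 𝒫₂ : Finset (Fin K)), 𝒫₁.card = P → 𝒫₂.card = P → 𝒫₁ ≠ 𝒫₂ →
      (cent q p (A 𝒫₂ n)
        (fun ω => ((fun k : {x : Fin K // x ∈ 𝒫₁} => W k.1 ω), Q 𝒫₂ n ω)) =
       cent q p (A 𝒫₂ n) (Q 𝒫₂ n)) ∧
      cmi q p (fun ω (k : {x : Fin K // x ∈ 𝒫₁}) => W k.1 ω) (A 𝒫₂ n) (Q 𝒫₂ n) = 0 := by
  have hq1 : 1 < q := hq.one_lt
  have hcard : ∀ T : Finset (Fin K), ((Tᶜ).card : ℝ) = K - T.card := by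
    intro T
    rw [Finset.card_compl, Fintype.card_fin, Nat.cast_sub]
    simpa using Finset.card_le_univ T
  -- lower bound on the entropy of message tuples
  have lowW : ∀ T : Finset (Fin K), (T.card : ℝ) * L ≤ ent q p (WT W T) := by
    intro T
    have h1 := WT_sub hq1 hp0 hp1 W hWk Tᶜ T (fun _ => ())
    have h2 := ent_mono hq1 hp0 hp1 (fun ω => (WT W (Tᶜ ∪ T) ω, ()))
      (fun ω (k : Fin K) => W k ω) (by
        intro a b h
        simp only [Prod.mk.injEq, WT_iff] at h
        funext k
        exact h.1 k (by simp [em']))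
    have h3 := ent_mono hq1 hp0 hp1 (WT W T) (fun ω => (WT W T ω, ())) (by
        intro a b h
        simp [h])
    rw [hcard] at h1
    rw [hWall] at h2
    linarith
  intro n 𝒫₁ 𝒫₂ h𝒫₁ h𝒫₂ _
  have hident : ∀ (𝒫₀ : Finset (Fin K)), 𝒫₀.card = P → ∀ T : Finset (Fin K),
      ent q p (fun ω => (WT W T ω, Q 𝒫₀ n ω, A 𝒫₀ n ω)) =
      ent q p (fun ω => (WT W T ω, Q 𝒫₂ n ω, A 𝒫₂ n ω)) := by
    intro 𝒫₀ h0 T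
    exact ent_comp q p _ _ (hupriv n 𝒫₀ 𝒫₂ h0 h𝒫₂)
      (fun x => ((fun k : {x : Fin K // x ∈ T} => x.2.2.1 k.1), x.1, x.2.1))
  set h : Finset (Fin K) → ℝ :=
    fun T => ent q p (fun ω => (WT W T ω, Q 𝒫₂ n ω, A 𝒫₂ n ω)) with hh
  have up : ∀ T T', h (T ∪ T') ≤ T.card * L + h T' := fun T T' =>
    WT_sub hq1 hp0 hp1 W hWk T T' (fun ω => (Q 𝒫₂ n ω, A 𝒫₂ n ω))
  have step : ∀ 𝒫₀ : Finset (Fin K), 𝒫₀.card = P → ((K : ℝ) - P) * L + h 𝒫₀ ≤ h univ := by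
    intro 𝒫₀ h0
    have e1 := hrel 𝒫₀ h0
    have e2 := hdpriv 𝒫₀ h0
    change ent q p (fun ω => (WT W 𝒫₀ ω, ((fun n : Fin N => A 𝒫₀ n ω), F ω))) - _ = 0 at e1
    change ent q p (WT W 𝒫₀ᶜ) + _ - ent q p (fun ω => (WT W 𝒫₀ᶜ ω,
      ((fun n : Fin N => Q 𝒫₀ n ω), (fun n : Fin N => A 𝒫₀ n ω), F ω))) = 0 at e2
    have e3 := submod hq1 hp0 hp1
      (fun ω => (WT W 𝒫₀ ω, ((fun n : Fin N => A 𝒫₀ n ω), F ω)))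
      (fun ω => ((fun n : Fin N => Q 𝒫₀ n ω), (fun n : Fin N => A 𝒫₀ n ω), F ω))
      (fun ω => ((fun n : Fin N => A 𝒫₀ n ω), F ω))
      (fun ω => (WT W 𝒫₀ ω, (fun n : Fin N => Q 𝒫₀ n ω), (fun n : Fin N => A 𝒫₀ n ω), F ω))
      (fun a b h => by simp only [Prod.mk.injEq] at h ⊢; tauto)
      (fun a b h => by simp only [Prod.mk.injEq] at h ⊢; tauto)
      (fun a b h h' => by simp only [Prod.mk.injEq] at h h' ⊢; tauto)
    have e4 := submod hq1 hp0 hp1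
      (fun ω => (WT W univ ω, Q 𝒫₀ n ω, A 𝒫₀ n ω))
      (fun ω => (WT W 𝒫₀ ω, (fun n : Fin N => Q 𝒫₀ n ω), (fun n : Fin N => A 𝒫₀ n ω), F ω))
      (fun ω => (WT W 𝒫₀ ω, Q 𝒫₀ n ω, A 𝒫₀ n ω))
      (fun ω => (WT W 𝒫₀ᶜ ω,
        ((fun n : Fin N => Q 𝒫₀ n ω), (fun n : Fin N => A 𝒫₀ n ω), F ω)))
      (fun a b h => by
        simp only [Prod.mk.injEq, WT_iff] at h ⊢
        exact ⟨fun k _ => h.1 k (mem_univ _), h.2⟩)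
      (fun a b h => by
        simp only [Prod.mk.injEq] at h ⊢
        exact ⟨h.1, congrFun h.2.1 n, congrFun h.2.2.1 n⟩)
      (fun a b h h' => by
        simp only [Prod.mk.injEq, WT_iff] at h h' ⊢
        exact ⟨fun k _ => h.1 k (mem_univ _), h'.2⟩)
    have e5 := lowW 𝒫₀ᶜ
    rw [hcard, h0] at e5
    rw [hident 𝒫₀ h0, hident 𝒫₀ h0] at e4
    simp only [hh]
    linarith
  have top : ∀ k : Fin K, (L : ℝ) + h (univ.erase k) ≤ h univ := by
    intro k
    obtain ⟨𝒫₀, hs, h0⟩ := Finset.exists_subset_card_eq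
      (s := (univ : Finset (Fin K)).erase k) (n := P) (by simpa using hP2)
    have h1 := step 𝒫₀ h0
    have h2 := up (univ.erase k \ 𝒫₀) 𝒫₀
    rw [Finset.sdiff_union_of_subset hs, Finset.card_sdiff_of_subset hs, h0,
      Finset.card_erase_of_mem (mem_univ k), Finset.card_univ, Fintype.card_fin,
      Nat.cast_sub hP2, Nat.cast_sub (by omega)] at h2
    push_cast at h2
    linarith
  have low : ∀ T : Finset (Fin K), (T.card : ℝ) * L + h ∅ ≤ h T := by
    intro T
    induction T using Finset.induction_on with
    | empty => simp
    | insert k T hk ih =>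
      have h1 := submod hq1 hp0 hp1
        (fun ω => (WT W (insert k T) ω, Q 𝒫₂ n ω, A 𝒫₂ n ω))
        (fun ω => (WT W (univ.erase k) ω, Q 𝒫₂ n ω, A 𝒫₂ n ω))
        (fun ω => (WT W T ω, Q 𝒫₂ n ω, A 𝒫₂ n ω))
        (fun ω => (WT W univ ω, Q 𝒫₂ n ω, A 𝒫₂ n ω))
        (fun a b h => by
          simp only [Prod.mk.injEq, WT_iff] at h ⊢
          exact ⟨fun j hj => h.1 j (mem_insert_of_mem hj), h.2⟩)
        (fun a b h => by
          simp only [Prod.mk.injEq, WT_iff] at h ⊢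
          refine ⟨fun j hj => h.1 j (mem_erase.2 ⟨?_, mem_univ _⟩), h.2⟩
          rintro rfl
          exact hk hj)
        (fun a b h h' => by
          simp only [Prod.mk.injEq, WT_iff] at h h' ⊢
          refine ⟨fun j _ => ?_, h.2⟩
          by_cases hj : j = k
          · exact h.1 j (by simp [hj])
          · exact h'.1 j (by simp [hj]))
      have h2 := top k
      simp only [hh] at h2 ih ⊢
      rw [Finset.card_insert_of_notMem hk]
      push_cast
      linarith
  have l1 := low 𝒫₁
  have u1 := up 𝒫₁ ∅
  rw [Finset.union_empty] at u1
  have u2 := WT_sub hq1 hp0 hp1 W hWk 𝒫₁ ∅ (Q 𝒫₂ n)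
  rw [Finset.union_empty] at u2
  have c2 := ent_mono hq1 hp0 hp1 (Q 𝒫₂ n) (fun ω => (WT W ∅ ω, Q 𝒫₂ n ω))
    (fun a b h => by simp [WT_iff, h])
  have s1 := submod hq1 hp0 hp1
    (fun ω => (WT W 𝒫₁ ω, Q 𝒫₂ n ω)) (fun ω => (WT W ∅ ω, Q 𝒫₂ n ω, A 𝒫₂ n ω)) (Q 𝒫₂ n)
    (fun ω => (WT W 𝒫₁ ω, Q 𝒫₂ n ω, A 𝒫₂ n ω))
    (fun a b h => by simp only [Prod.mk.injEq] at h; exact h.2)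
    (fun a b h => by simp only [Prod.mk.injEq] at h; exact h.2.1)
    (fun a b h h' => by simp only [Prod.mk.injEq] at h h' ⊢; tauto)
  have c3 : ent q p (fun ω => (A 𝒫₂ n ω, Q 𝒫₂ n ω)) = h ∅ := by
    apply le_antisymm
    · exact ent_mono hq1 hp0 hp1 _ _
        (fun a b h => by simp only [Prod.mk.injEq] at h ⊢; tauto)
    · exact ent_mono hq1 hp0 hp1 _ _
        (fun a b h => by simp only [Prod.mk.injEq, WT_iff] at h ⊢; simp [h])
  have c4 : ent q p (fun ω => (A 𝒫₂ n ω, (WT W 𝒫₁ ω, Q 𝒫₂ n ω))) = h 𝒫₁ := by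
    apply le_antisymm <;> exact ent_mono hq1 hp0 hp1 _ _
        (fun a b h => by simp only [Prod.mk.injEq] at h ⊢; tauto)
  have c5 : ent q p (fun ω => ((WT W 𝒫₁ ω, A 𝒫₂ n ω), Q 𝒫₂ n ω)) = h 𝒫₁ := by
    apply le_antisymm <;> exact ent_mono hq1 hp0 hp1 _ _
        (fun a b h => by simp only [Prod.mk.injEq] at h ⊢; tauto)
  change cent q p (A 𝒫₂ n) (fun ω => (WT W 𝒫₁ ω, Q 𝒫₂ n ω)) = _ ∧
    cmi q p (WT W 𝒫₁) (A 𝒫₂ n) (Q 𝒫₂ n) = 0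
  simp only [cmi, cent, c3, c4, c5]
  simp only [hh] at *
  constructor <;> linarith

end MMSPIR
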